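/- Let Z be a real vector space and B : Z →ₗ[ℝ] Z →ₗ[ℝ] ℝ a bilinear form. For a submodule P ⊆ Z let orth_B(P) := {z ∈ Z | ∀ p ∈ P, B(p)(z) = 0}, and call P Lagrangian with respect to B if P = orth_B(P). Define the tangent-lift form Ḃ on Z × Z by Ḃ((z,ż))((w,ẇ)) := B(z)(ẇ) + B(ż)(w). If P is Lagrangian with respect to B, then the submodule P × P ⊆ Z × Z (Submodule.prod P P) is Lagrangian with respect to Ḃ. -/

import Mathlib

section TangentLift

variable {R R₁ R₂ M M₁ M₂ : Type*} [CommSemiring R] [CommSemiring R₁] [CommSemiring R₂]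
  [AddCommMonoid M] [Module R M] [AddCommMonoid M₁] [Module R₁ M₁] [AddCommMonoid M₂] [Module R₂ M₂]
  {I₁ : R₁ →+* R} {I₂ : R₂ →+* R}

/-- The tangent lift `Ḃ` of a sesquilinear map `B`, that is, the derivative of `(z, w) ↦ B z w`.
In `(z, ż)` the first component is the base point and the second one the velocity. -/
def tangentLift (B : M₁ →ₛₗ[I₁] M₂ →ₛₗ[I₂] M) : M₁ × M₁ →ₛₗ[I₁] M₂ × M₂ →ₛₗ[I₂] M :=
  (B.comp (LinearMap.fst R₁ M₁ M₁)).compl₂ (LinearMap.snd R₂ M₂ M₂) +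
    (B.comp (LinearMap.snd R₁ M₁ M₁)).compl₂ (LinearMap.fst R₂ M₂ M₂)

@[simp]
theorem tangentLift_apply (B : M₁ →ₛₗ[I₁] M₂ →ₛₗ[I₂] M) (v : M₁ × M₁) (w : M₂ × M₂) :
    tangentLift B v w = B v.1 w.2 + B v.2 w.1 :=
  rfl

theorem orthogonalBilin_tangentLift_prod (B : M₁ →ₛₗ[I₁] M₂ →ₛₗ[I₂] M) (P Q : Submodule R₁ M₁) :
    (P.prod Q).orthogonalBilin (tangentLift B) =
      (Q.orthogonalBilin B).prod (P.orthogonalBilin B) := by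
  ext w
  simp only [Submodule.mem_prod, Submodule.mem_orthogonalBilin_iff, tangentLift_apply]
  constructor
  · intro h
    -- The lift pairs base points with velocities, so `(0, q)` and `(p, 0)` isolate its two terms.
    exact ⟨fun q hq ↦ by simpa using h (0, q) ⟨P.zero_mem, hq⟩,
      fun p hp ↦ by simpa using h (p, 0) ⟨hp, Q.zero_mem⟩⟩
  · rintro ⟨hQ, hP⟩ v ⟨hv₁, hv₂⟩
    rw [hP v.1 hv₁, hQ v.2 hv₂, add_zero]

end TangentLift

section Lagrangian

variable {R R₁ M Z : Type*} [CommSemiring R] [CommSemiring R₁] [AddCommMonoid M] [Module R M]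
  [AddCommMonoid Z] [Module R₁ Z] {I₁ I₂ : R₁ →+* R} {B : Z →ₛₗ[I₁] Z →ₛₗ[I₂] M}
  {P : Submodule R₁ Z}

/-- A submodule is Lagrangian with respect to a sesquilinear map `B` if it equals its
`B`-orthogonal. As `B` need not be symmetric, the side matters: the elements of `P` are the
first arguments of `B`. -/
def IsLagrangian (B : Z →ₛₗ[I₁] Z →ₛₗ[I₂] M) (P : Submodule R₁ Z) : Prop :=
  P = P.orthogonalBilin B

theorem isLagrangian_iff_forall_mem_iff :
    IsLagrangian B P ↔ ∀ z, z ∈ P ↔ ∀ p ∈ P, B p z = 0 :=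
  Submodule.ext_iff

theorem tangent_lift_lagrangian_flat_general :
    IsLagrangian (tangentLift B) (P.prod P) ↔ IsLagrangian B P := by
  rw [IsLagrangian, IsLagrangian, orthogonalBilin_tangentLift_prod]
  refine ⟨fun h ↦ ?_, fun h ↦ congrArg (fun Q ↦ Q.prod Q) h⟩
  simpa only [Submodule.prod_map_fst] using congrArg (Submodule.map (LinearMap.fst R₁ Z Z)) h

end Lagrangian

/-- Flat linear model of the corollaries that for a Lagrangian submanifold `P` of
`T*M` (resp. `ΠT*M`), the tangent bundle `TP` is a Lagrangian submanifold of
`T(T*M) = T*(TM)` (resp. `T(ΠT*M) = ΠT*(TM)`) with respect to the lifted symplectic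
form: if a subspace `P ⊆ Z` equals its `B`-orthogonal, then `P × P ⊆ Z × Z` equals
its orthogonal with respect to the tangent lift `Ḃ((z,ż))((w,ẇ)) = B(z)(ẇ) + B(ż)(w)`. -/
theorem tangent_lift_lagrangian_flat {Z : Type*} [AddCommGroup Z] [Module ℝ Z]
    (B : Z →ₗ[ℝ] Z →ₗ[ℝ] ℝ) (P : Submodule ℝ Z)
    (hP : ∀ z : Z, z ∈ P ↔ ∀ p ∈ P, B p z = 0) :
    let Bdot : Z × Z → Z × Z → ℝ := fun v w => B v.1 w.2 + B v.2 w.1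
    ∀ v : Z × Z, v ∈ Submodule.prod P P ↔ ∀ u ∈ Submodule.prod P P, Bdot u v = 0 :=
  isLagrangian_iff_forall_mem_iff.mp <|
    tangent_lift_lagrangian_flat_general.mpr (isLagrangian_iff_forall_mem_iff.mpr hP)
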